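/- arXiv:2007.09591 — 2 statements merged into one kernel-verified Lean document; each statement's English description precedes it below -/
import Mathlib

section
/- Let l₁ = (3/5, 4/5), l₂ = (1, 0), and let R₁^o, R₂^o be the Fourier multipliers on 𝕋² with symbols 25(k₂² − k₁²)/(12|k|²) and 7(k₂² − k₁²)/(12|k|²) + 4k₁k₂/|k|². Let C₀ ≥ 2 be a constant, let q ∈ C₀^∞(𝕋²), and let r > 0, λ > 0 be such that ‖R_j^o q‖_∞ ≤ r for j = 1, 2. Define a_j = 2 √(r/(5λ)) √(C₀ + R_j^o(q)/r) for j = 1, 2 (the functions under the square root are ≥ 1, so a_j ∈ C^∞(𝕋²)). Then there exists a smooth scalar p on 𝕋² such that −(1/4)·(5λ)·∑_{j=1}^{2} l_j^⊥ (l_j·∇)(a_j²) + ∇q = ∇^⊥ p, where l^⊥ = (−b,a) for l = (a,b) and ∇^⊥ = (−∂₂, ∂₁). -/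
open MeasureTheory Complex Filter

noncomputable section

abbrev Z2 := ℤ × ℤ

/-- dot product of an integer frequency with a point of `ℝ²` -/
def dotZ (k : Z2) (x : ℝ × ℝ) : ℝ := (k.1 : ℝ) * x.1 + (k.2 : ℝ) * x.2

/-- Euclidean norm of an integer frequency -/
def knorm (k : Z2) : ℝ := Real.sqrt ((k.1 : ℝ) ^ 2 + (k.2 : ℝ) ^ 2)

/-- Euclidean norm on `ℝ²` (realized as `ℝ × ℝ`) -/
def e2 (x : ℝ × ℝ) : ℝ := Real.sqrt (x.1 ^ 2 + x.2 ^ 2)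

/-- the fundamental domain `[-π, π]²` of the torus -/
def Q2 : Set (ℝ × ℝ) := Set.Icc (-Real.pi, -Real.pi) (Real.pi, Real.pi)

/-- `2π`-periodicity in both variables -/
def Periodic2 (f : ℝ × ℝ → ℂ) : Prop :=
  ∀ x : ℝ × ℝ, f (x.1 + 2 * Real.pi, x.2) = f x ∧ f (x.1, x.2 + 2 * Real.pi) = f x

def RealValued (f : ℝ × ℝ → ℂ) : Prop := ∀ x, (f x).im = 0

/-- Fourier coefficient `f̂(k) = (2π)⁻² ∫_{𝕋²} f(x) e^{-ik⋅x} dx` -/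
def fCoeff (f : ℝ × ℝ → ℂ) (k : Z2) : ℂ :=
  (1 / (2 * Real.pi) ^ 2 : ℂ) * ∫ x in Q2, f x * Complex.exp (-Complex.I * (dotZ k x : ℝ))

/-- Fourier multiplier operator with symbol `m` -/
def Tmult (m : Z2 → ℂ) (f : ℝ × ℝ → ℂ) : ℝ × ℝ → ℂ :=
  fun x => ∑' k : Z2, m k * fCoeff f k * Complex.exp (Complex.I * (dotZ k x : ℝ))

/-- `Λ^s = (-Δ)^{s/2}`, the multiplier with symbol `|k|^s` (killing `k = 0` for `s ≤ 0`) -/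
def Lam (s : ℝ) : (ℝ × ℝ → ℂ) → (ℝ × ℝ → ℂ) :=
  Tmult fun k => if k = 0 then 0 else ((knorm k ^ s : ℝ) : ℂ)

/-- symbol of the Riesz transform `R_j`, `i k_j / |k|` -/
def rieszSym (j : Fin 2) (k : Z2) : ℂ :=
  if k = 0 then 0
  else Complex.I * ((if j = 0 then (k.1 : ℝ) else (k.2 : ℝ)) : ℂ) / ((knorm k : ℝ) : ℂ)

/-- the Riesz transform `R_j` -/
def Riesz (j : Fin 2) : (ℝ × ℝ → ℂ) → (ℝ × ℝ → ℂ) := Tmult (rieszSym j)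

/-- symbol of the modified Riesz-type transforms `R_j^o` of Lemma 2.2 -/
def RoSym (j : Fin 2) (k : Z2) : ℝ :=
  if k = 0 then 0
  else if j = 0 then 25 * ((k.2 : ℝ) ^ 2 - (k.1 : ℝ) ^ 2) / (12 * ((k.1 : ℝ) ^ 2 + (k.2 : ℝ) ^ 2))
  else 7 * ((k.2 : ℝ) ^ 2 - (k.1 : ℝ) ^ 2) / (12 * ((k.1 : ℝ) ^ 2 + (k.2 : ℝ) ^ 2))
      + 4 * (k.1 : ℝ) * (k.2 : ℝ) / ((k.1 : ℝ) ^ 2 + (k.2 : ℝ) ^ 2)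

/-- the Riesz-type transforms `R_j^o` -/
def Ro (j : Fin 2) : (ℝ × ℝ → ℂ) → (ℝ × ℝ → ℂ) := Tmult fun k => ((RoSym j k : ℝ) : ℂ)

/-- symbol of `Δ⁻¹` (mean annihilated) -/
def deltaInvSym (k : Z2) : ℂ := if k = 0 then 0 else -1 / ((knorm k ^ 2 : ℝ) : ℂ)

/-- directional derivative `(v ⋅ ∇) f` -/
def dirD (v : ℝ × ℝ) (f : ℝ × ℝ → ℂ) : ℝ × ℝ → ℂ := fun x => fderiv ℝ f x v

/-- partial derivative `∂_j f` -/
def pd (j : Fin 2) (f : ℝ × ℝ → ℂ) : ℝ × ℝ → ℂ :=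
  dirD (if j = 0 then ((1 : ℝ), (0 : ℝ)) else ((0 : ℝ), (1 : ℝ))) f

/-- sup norm on the torus -/
def supNorm (f : ℝ × ℝ → ℂ) : ℝ := ⨆ x : ℝ × ℝ, ‖f x‖

/-- the `X`-norm `‖q‖_X = ‖q‖_∞ + ‖R₁^o q‖_∞ + ‖R₂^o q‖_∞` -/
def Xnorm (q : ℝ × ℝ → ℂ) : ℝ := supNorm q + supNorm (Ro 0 q) + supNorm (Ro 1 q)

/-- the vectors `l₁ = (3/5, 4/5)` and `l₂ = (1,0)` -/
def l1 : ℝ × ℝ := (3 / 5, 4 / 5)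
def l2 : ℝ × ℝ := (1, 0)

/-- the rotation `l ↦ l^⊥` -/
def perp (l : ℝ × ℝ) : ℝ × ℝ := (-l.2, l.1)

/-- symbol view of frequencies as real vectors -/
def toR (k : Z2) : ℝ × ℝ := ((k.1 : ℝ), (k.2 : ℝ))

/-- the operator `T^{(1)}_{λl}` (where `κ = λl ∈ ℤ²`) -/
def T1op (κ : Z2) (lam : ℝ) : (ℝ × ℝ → ℂ) → (ℝ × ℝ → ℂ) :=
  Tmult fun k => (((knorm (κ + k) + knorm (κ - k)) / 2 - lam : ℝ) : ℂ)

/-- the operator `T^{(2)}_{λl}` (where `κ = λl ∈ ℤ²`) -/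
def T2op (κ : Z2) (l : ℝ × ℝ) : (ℝ × ℝ → ℂ) → (ℝ × ℝ → ℂ) :=
  Tmult fun k =>
    Complex.I * (((knorm (κ + k) - knorm (κ - k)) / 2 - (l.1 * (k.1 : ℝ) + l.2 * (k.2 : ℝ)) : ℝ) : ℂ)

/-- the functions `a_j = 2 √(r/den) √(C₀ + R_j^o q / r)` -/
def aPerf (q : ℝ × ℝ → ℂ) (r den C₀ : ℝ) (j : Fin 2) : ℝ × ℝ → ℂ :=
  fun x => ((2 * Real.sqrt (r / den) * Real.sqrt (C₀ + (Ro j q x).re / r) : ℝ) : ℂ)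

/-- `λ_n = ⌈λ₀^{bⁿ}⌉` -/
def lamSeq (lam0 : ℕ) (b : ℝ) (n : ℕ) : ℕ := ⌈((lam0 : ℝ)) ^ (b ^ n)⌉₊

/-- `r_n = λ_n^{-β}` -/
def rSeq (lam0 : ℕ) (b β : ℝ) (n : ℕ) : ℝ := ((lamSeq lam0 b n : ℝ)) ^ (-β)

/-- `μ_{n+1} = (λ_n λ_{n+1})^{1/2}` -/
def muSeq (lam0 : ℕ) (b : ℝ) (n : ℕ) : ℝ :=
  Real.sqrt ((lamSeq lam0 b n : ℝ) * (lamSeq lam0 b (n + 1) : ℝ))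

/-- smooth Fourier cutoff `P_{≤μ}` associated to a bump `ψ` -/
def Pcut (ψ : ℝ × ℝ → ℝ) (μ : ℝ) : (ℝ × ℝ → ℂ) → (ℝ × ℝ → ℂ) :=
  Tmult fun k => ((ψ ((k.1 : ℝ) / μ, (k.2 : ℝ) / μ) : ℝ) : ℂ)

/-- bilinear multiplier with symbol the Fourier transform of a kernel `K ∈ L¹(ℝ²×ℝ²)` -/
def mOf (K : (ℝ × ℝ) × (ℝ × ℝ) → ℂ) (ξ η : ℝ × ℝ) : ℂ :=
  ∫ z : (ℝ × ℝ) × (ℝ × ℝ),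
    K z * Complex.exp (-Complex.I * ((ξ.1 * z.1.1 + ξ.2 * z.1.2 + η.1 * z.2.1 + η.2 * z.2.2 : ℝ) : ℂ))

/-- the bilinear multiplier operator associated to a kernel `K ∈ L¹(ℝ²×ℝ²)` -/
def Tbil (K : (ℝ × ℝ) × (ℝ × ℝ) → ℂ) (f g : ℝ × ℝ → ℂ) : ℝ × ℝ → ℂ :=
  fun x => ∑' k : Z2,
    (∑' k' : Z2, mOf K (toR k') (toR (k - k')) * fCoeff f k' * fCoeff g (k - k'))
      * Complex.exp (Complex.I * (dotZ k x : ℝ))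

/-- Fourier coefficients of the commutator `[R_j, φ]θ`, computed from those of `φ` and `θ` -/
def commCoeff (j : Fin 2) (φh c : Z2 → ℂ) (k : Z2) : ℂ :=
  ∑' k' : Z2, (rieszSym j k - rieszSym j k') * φh (k - k') * c k'

/-!
On the Fourier side `∇q - ∑ⱼ lⱼ^⊥ (lⱼ·∇) Rⱼᵒ q` has coefficients
`i (k - ∑ⱼ lⱼ^⊥ (lⱼ·k) mⱼ(k)) q̂(k)`, where `mⱼ` is the symbol of `Rⱼᵒ`. The `mⱼ` are chosen so that
`∑ⱼ (lⱼ·k) (lⱼ^⊥·k) mⱼ(k) = |k|²`: this vector is orthogonal to `k`, hence a multiple of `k^⊥`,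
and the multiple is the symbol of the pressure, which turns out to have the same shape as the
`mⱼ`. Since `Rⱼᵒ q` is real, `aⱼ²` is `4 / (5λ) · Rⱼᵒ q` up to a constant, so that the prefactor
`-(1/4)(5λ)` produces exactly the field above. Term-by-term differentiation is justified by the
rapid decay of the Fourier coefficients of a smooth function.
-/

open Asymptotics
open scoped ComplexConjugate Pointwise

/-! ### Characters -/

/-- The character `x ↦ e^{ik·x}` of the torus, as a `2π`-periodic function on `ℝ²`. -/
def torusChar (k : Z2) (x : ℝ × ℝ) : ℂ := Complex.exp (I * (dotZ k x : ℝ))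

/-- The functional `x ↦ k·x`, the continuous linear version of `dotZ k`. -/
def dotCLM (k : Z2) : ℝ × ℝ →L[ℝ] ℝ :=
  (k.1 : ℝ) • ContinuousLinearMap.fst ℝ ℝ ℝ + (k.2 : ℝ) • ContinuousLinearMap.snd ℝ ℝ ℝ

lemma dotCLM_apply (k : Z2) (x : ℝ × ℝ) : dotCLM k x = dotZ k x := rfl

lemma dotZ_neg_left (k : Z2) (x : ℝ × ℝ) : dotZ (-k) x = -dotZ k x := by
  simp only [dotZ, Prod.fst_neg, Prod.snd_neg, Int.cast_neg]
  ring

lemma norm_torusChar (k : Z2) (x : ℝ × ℝ) : ‖torusChar k x‖ = 1 := by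
  rw [torusChar, mul_comm, norm_exp_ofReal_mul_I]

lemma torusChar_neg (k : Z2) (x : ℝ × ℝ) :
    torusChar (-k) x = Complex.exp (-I * (dotZ k x : ℝ)) := by
  rw [torusChar, dotZ_neg_left, ofReal_neg, mul_neg, neg_mul]

lemma conj_torusChar (k : Z2) (x : ℝ × ℝ) : conj (torusChar k x) = torusChar (-k) x := by
  rw [torusChar_neg, torusChar, ← exp_conj, map_mul, conj_I, conj_ofReal]

lemma periodic2_torusChar (k : Z2) : Periodic2 (torusChar k) := fun x => by
  simp only [torusChar, exp_eq_exp_iff_exists_int]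
  exact ⟨⟨k.1, by simp only [dotZ]; push_cast; ring⟩, ⟨k.2, by simp only [dotZ]; push_cast; ring⟩⟩

lemma hasFDerivAt_torusChar (k : Z2) (x : ℝ × ℝ) :
    HasFDerivAt (torusChar k) (torusChar k x • I • ofRealCLM.comp (dotCLM k)) x :=
  ((ofRealCLM.comp (dotCLM k)).hasFDerivAt.const_mul I).cexp

lemma contDiff_torusChar (k : Z2) {n : WithTop ℕ∞} : ContDiff ℝ n (torusChar k) :=
  (contDiff_const.mul (ofRealCLM.comp (dotCLM k)).contDiff).cexp

lemma fCoeff_eq_integral_torusChar (f : ℝ × ℝ → ℂ) (k : Z2) :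
    fCoeff f k = 1 / (2 * Real.pi) ^ 2 * ∫ x in Q2, f x * torusChar (-k) x := by
  simp only [torusChar_neg, fCoeff]

lemma exists_norm_fCoeff_le (f : ℝ × ℝ → ℂ) : ∃ C, ∀ k, ‖fCoeff f k‖ ≤ C := by
  refine ⟨‖(1 / (2 * Real.pi) ^ 2 : ℂ)‖ * ∫ x in Q2, ‖f x‖, fun k => ?_⟩
  rw [fCoeff_eq_integral_torusChar, norm_mul]
  gcongr
  refine (norm_integral_le_integral_norm _).trans_eq ?_
  simp only [norm_mul, norm_torusChar, mul_one]

/-! ### Smooth functions on the torus -/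

/-- The class `C^∞(𝕋²)`, realized as the smooth functions on `ℝ²` that are `2π`-periodic in both
variables. -/
structure TorusSmooth (f : ℝ × ℝ → ℂ) : Prop where
  contDiff : ContDiff ℝ (⊤ : ℕ∞) f
  periodic : Periodic2 f

lemma periodic2_iff_add {f : ℝ × ℝ → ℂ} :
    Periodic2 f ↔ ∀ x, f (x + (2 * Real.pi, 0)) = f x ∧ f (x + (0, 2 * Real.pi)) = f x := by
  simp only [Periodic2, Prod.forall, Prod.mk_add_mk, add_zero]

protected lemma Periodic2.dirD {f : ℝ × ℝ → ℂ} (hf : Periodic2 f) (v : ℝ × ℝ) :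
    Periodic2 (dirD v f) := by
  have fderiv_add {a : ℝ × ℝ} (ha : ∀ x, f (x + a) = f x) (x : ℝ × ℝ) :
      fderiv ℝ f (x + a) = fderiv ℝ f x := by
    rw [← fderiv_comp_add_right, funext ha]
  rw [periodic2_iff_add] at hf ⊢
  exact fun x => ⟨congrArg (· v) (fderiv_add (fun y => (hf y).1) x),
    congrArg (· v) (fderiv_add (fun y => (hf y).2) x)⟩

lemma Periodic2.map_add_int_mul {f : ℝ × ℝ → ℂ} (hf : Periodic2 f) (x y : ℝ) (m n : ℤ) :
    f (x + m * (2 * Real.pi), y + n * (2 * Real.pi)) = f (x, y) := by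
  have periodic_fst : ∀ y, Function.Periodic (fun x => f (x, y)) (2 * Real.pi) :=
    fun y x => (hf (x, y)).1
  have periodic_snd : ∀ x, Function.Periodic (fun y => f (x, y)) (2 * Real.pi) :=
    fun x y => (hf (x, y)).2
  exact ((periodic_fst _).int_mul m x).trans ((periodic_snd _).int_mul n y)

lemma torusSmooth_torusChar (k : Z2) : TorusSmooth (torusChar k) :=
  ⟨contDiff_torusChar k, periodic2_torusChar k⟩

namespace TorusSmooth

variable {f g : ℝ × ℝ → ℂ}

protected lemma mul (hf : TorusSmooth f) (hg : TorusSmooth g) : TorusSmooth fun x => f x * g x :=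
  ⟨hf.contDiff.mul hg.contDiff, fun x => by
    simp only [hf.periodic x, hg.periodic x, and_self]⟩

protected lemma sub (hf : TorusSmooth f) (hg : TorusSmooth g) : TorusSmooth fun x => f x - g x :=
  ⟨hf.contDiff.sub hg.contDiff, fun x => by
    simp only [hf.periodic x, hg.periodic x, and_self]⟩

protected lemma dirD (hf : TorusSmooth f) (v : ℝ × ℝ) : TorusSmooth (dirD v f) :=
  ⟨(hf.contDiff.fderiv_right (by simp)).clm_apply contDiff_const, hf.periodic.dirD v⟩

lemma hasFDerivAt (hf : TorusSmooth f) (x : ℝ × ℝ) : HasFDerivAt f (fderiv ℝ f x) x :=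
  (hf.contDiff.differentiable (by simp) x).hasFDerivAt

lemma integrableOn (hf : TorusSmooth f) : IntegrableOn f Q2 :=
  hf.contDiff.continuous.continuousOn.integrableOn_compact isCompact_Icc

lemma integral_dirD (hf : TorusSmooth f) (v : ℝ × ℝ) : ∫ x in Q2, dirD v f x = 0 := by
  have le : ((-Real.pi, -Real.pi) : ℝ × ℝ) ≤ (Real.pi, Real.pi) := by
    have := neg_le_self Real.pi_pos.le
    exact ⟨this, this⟩
  have fst_eq (y : ℝ) : f (Real.pi, y) = f (-Real.pi, y) := by
    rw [← (hf.periodic (-Real.pi, y)).1]; congr 2; ring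
  have snd_eq (x : ℝ) : f (x, Real.pi) = f (x, -Real.pi) := by
    rw [← (hf.periodic (x, -Real.pi)).2]; congr 2; ring
  have dirD_eq (x : ℝ × ℝ) :
      (v.1 • fderiv ℝ f x) (1, 0) + (v.2 • fderiv ℝ f x) (0, 1) = dirD v f x := by
    simp only [smul_apply, ← map_smul, ← map_add, dirD]
    congr 1
    ext <;> simp
  have divergence := integral_divergence_prod_Icc_of_hasFDerivAt_of_le
    (v.1 • f) (v.2 • f) (fun x => v.1 • fderiv ℝ f x) (fun x => v.2 • fderiv ℝ f x) _ _ le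
    (hf.contDiff.continuous.const_smul _).continuousOn
    (hf.contDiff.continuous.const_smul _).continuousOn
    (fun x _ => (hf.hasFDerivAt x).const_smul _) (fun x _ => (hf.hasFDerivAt x).const_smul _) (by
      simp only [dirD_eq]
      exact (hf.dirD v).integrableOn)
  simpa only [Q2, dirD_eq, Pi.smul_apply, fst_eq, snd_eq, sub_self, zero_add] using divergence

lemma fCoeff_sub (hf : TorusSmooth f) (hg : TorusSmooth g) (k : Z2) :
    fCoeff (fun x => f x - g x) k = fCoeff f k - fCoeff g k := by
  simp only [fCoeff_eq_integral_torusChar, sub_mul]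
  rw [integral_sub (hf.mul (torusSmooth_torusChar _)).integrableOn
    (hg.mul (torusSmooth_torusChar _)).integrableOn, mul_sub]

lemma fCoeff_dirD (hf : TorusSmooth f) (v : ℝ × ℝ) (k : Z2) :
    fCoeff (dirD v f) k = I * (dotZ k v : ℝ) * fCoeff f k := by
  have leibniz (x : ℝ × ℝ) : dirD v (fun y => f y * torusChar (-k) y) x =
      dirD v f x * torusChar (-k) x
        - I * (dotZ k v : ℝ) * (f x * torusChar (-k) x) := by
    have h := ((hf.hasFDerivAt x).mul (hasFDerivAt_torusChar (-k) x)).fderiv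
    simp only [dirD, Pi.mul_def] at h ⊢
    simp only [h, add_apply, smul_apply, ContinuousLinearMap.comp_apply, dotCLM_apply,
      dotZ_neg_left, ofRealCLM_apply, ofReal_neg, smul_eq_mul, mul_neg]
    ring
  have parts := (hf.mul (torusSmooth_torusChar (-k))).integral_dirD v
  simp only [leibniz] at parts
  rw [integral_sub ((hf.dirD v).mul (torusSmooth_torusChar _)).integrableOn
    ((hf.mul (torusSmooth_torusChar _)).integrableOn.const_mul _), integral_const_mul,
    sub_eq_zero] at parts
  rw [fCoeff_eq_integral_torusChar, fCoeff_eq_integral_torusChar, parts]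
  ring

end TorusSmooth

/-! ### Decay of Fourier coefficients -/

/-- The symbol of `(1 - ∂₁²)(1 - ∂₂²)`. Its powers measure the growth of symbols and the decay of
Fourier coefficients; the product form makes its inverse summable over `ℤ²` as a product of
one-dimensional series. -/
def weight (k : Z2) : ℝ := (1 + (k.1 : ℝ) ^ 2) * (1 + (k.2 : ℝ) ^ 2)

lemma weight_pos (k : Z2) : 0 < weight k := by
  unfold weight; positivity

lemma abs_dotZ_le (k : Z2) (v : ℝ × ℝ) : |dotZ k v| ≤ 2 * ‖v‖ * weight k := by
  have abs_le (a : ℝ) : |a| ≤ 1 + a ^ 2 := by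
    nlinarith [sq_abs a, sq_nonneg (|a| - 1)]
  have fst_le : |(k.1 : ℝ)| ≤ weight k :=
    (abs_le _).trans (le_mul_of_one_le_right (by positivity) (by simp [sq_nonneg]))
  have snd_le : |(k.2 : ℝ)| ≤ weight k :=
    (abs_le _).trans (le_mul_of_one_le_left (by positivity) (by simp [sq_nonneg]))
  calc |dotZ k v| ≤ |(k.1 : ℝ)| * ‖v.1‖ + |(k.2 : ℝ)| * ‖v.2‖ := by
        simpa only [dotZ, abs_mul, Real.norm_eq_abs] using abs_add_le (k.1 * v.1) (k.2 * v.2)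
    _ ≤ weight k * ‖v‖ + weight k * ‖v‖ := by
        gcongr
        exacts [(weight_pos k).le, norm_fst_le v, (weight_pos k).le, norm_snd_le v]
    _ = 2 * ‖v‖ * weight k := by ring

lemma norm_dotCLM_le (k : Z2) : ‖dotCLM k‖ ≤ 2 * weight k :=
  (dotCLM k).opNorm_le_bound (by linarith [weight_pos k]) fun v =>
    (abs_dotZ_le k v).trans_eq (by ring)

lemma norm_smul_fderiv_torusChar_le (k : Z2) (x : ℝ × ℝ) (c : ℂ) :
    ‖c • torusChar k x • I • ofRealCLM.comp (dotCLM k)‖ ≤ 2 * weight k * ‖c‖ := by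
  rw [norm_smul, norm_smul, norm_smul, norm_torusChar, norm_I, one_mul, one_mul, mul_comm]
  gcongr
  exact (ContinuousLinearMap.opNorm_comp_le _ _).trans (by simpa using norm_dotCLM_le k)

lemma summable_inv_one_add_int_sq : Summable fun n : ℤ => (1 + (n : ℝ) ^ 2)⁻¹ := by
  refine .of_norm_bounded_eventually (Real.summable_one_div_int_pow.mpr one_lt_two) ?_
  filter_upwards [(Set.finite_singleton (0 : ℤ)).compl_mem_cofinite] with n hn
  have : (n : ℝ) ≠ 0 := Int.cast_ne_zero.mpr hn
  rw [Real.norm_of_nonneg (by positivity), one_div]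
  gcongr
  exact le_add_of_nonneg_left zero_le_one

lemma summable_inv_weight : Summable fun k => (weight k)⁻¹ := by
  simpa only [weight, mul_inv] using summable_inv_one_add_int_sq.mul_of_nonneg
    summable_inv_one_add_int_sq (fun _ => by positivity) (fun _ => by positivity)

/-- The operator `1 - (v·∇)²`, with symbol `1 + (k·v)²`. -/
def oneSubDirDSq (v : ℝ × ℝ) (f : ℝ × ℝ → ℂ) : ℝ × ℝ → ℂ := fun x => f x - dirD v (dirD v f) x

namespace TorusSmooth

variable {f : ℝ × ℝ → ℂ}

protected lemma oneSubDirDSq (hf : TorusSmooth f) (v : ℝ × ℝ) : TorusSmooth (oneSubDirDSq v f) :=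
  hf.sub ((hf.dirD v).dirD v)

lemma fCoeff_oneSubDirDSq (hf : TorusSmooth f) (v : ℝ × ℝ) (k : Z2) :
    fCoeff (oneSubDirDSq v f) k = (1 + dotZ k v ^ 2 : ℝ) * fCoeff f k := by
  unfold oneSubDirDSq
  rw [hf.fCoeff_sub ((hf.dirD v).dirD v), (hf.dirD v).fCoeff_dirD, hf.fCoeff_dirD]
  push_cast
  linear_combination -(dotZ k v : ℂ) ^ 2 * fCoeff f k * I_sq

lemma exists_fCoeff_eq_weight_mul (hf : TorusSmooth f) :
    ∃ g, TorusSmooth g ∧ ∀ k, fCoeff g k = weight k * fCoeff f k := by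
  refine ⟨_, (hf.oneSubDirDSq (0, 1)).oneSubDirDSq (1, 0), fun k => ?_⟩
  rw [(hf.oneSubDirDSq (0, 1)).fCoeff_oneSubDirDSq, hf.fCoeff_oneSubDirDSq, ← mul_assoc,
    ← ofReal_mul]
  simp only [dotZ, weight, mul_zero, mul_one, zero_add, add_zero]

lemma summable_fCoeff (hf : TorusSmooth f) : Summable (fCoeff f) := by
  obtain ⟨g, -, hg⟩ := hf.exists_fCoeff_eq_weight_mul
  obtain ⟨C, hC⟩ := exists_norm_fCoeff_le g
  refine .of_norm_bounded (summable_inv_weight.mul_left C) fun k => ?_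
  rw [← div_eq_mul_inv, le_div_iff₀' (weight_pos k)]
  calc weight k * ‖fCoeff f k‖ = ‖fCoeff g k‖ := by
        rw [hg, norm_mul, norm_real, Real.norm_of_nonneg (weight_pos k).le]
    _ ≤ C := hC k

lemma summable_weight_pow_mul_fCoeff (n : ℕ) :
    ∀ {f}, TorusSmooth f → Summable fun k => (weight k : ℂ) ^ n * fCoeff f k := by
  induction n with
  | zero => intro f hf; simpa only [pow_zero, one_mul] using hf.summable_fCoeff
  | succ n ih =>
    intro f hf
    obtain ⟨g, hg, hfg⟩ := hf.exists_fCoeff_eq_weight_mul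
    simpa only [pow_succ, mul_assoc, hfg] using ih hg

end TorusSmooth

/-! ### Fourier inversion -/

/-- The dilation from the period `1` of Mathlib's `UnitAddTorus` to the period `2π`. -/
def twoPiDilation (t : Fin 2 → ℝ) : ℝ × ℝ := (2 * Real.pi * t 0, 2 * Real.pi * t 1)

lemma twoPiDilation_surjective : Function.Surjective twoPiDilation := fun x =>
  ⟨![x.1 / (2 * Real.pi), x.2 / (2 * Real.pi)], by
    simp only [twoPiDilation, Matrix.cons_val_zero, Matrix.cons_val_one,
      mul_div_cancel₀ _ Real.two_pi_pos.ne']⟩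

lemma mFourier_coe (n : Fin 2 → ℤ) (t : Fin 2 → ℝ) :
    UnitAddTorus.mFourier n (fun i => (t i : UnitAddCircle)) =
      torusChar (n 0, n 1) (twoPiDilation t) := by
  simp only [UnitAddTorus.mFourier, ContinuousMap.coe_mk, Fin.prod_univ_two, fourier_coe_apply,
    ← Complex.exp_add, dotZ, torusChar, twoPiDilation]
  congr 1
  push_cast
  ring

lemma Periodic2.exists_unitAddTorus_lift {f : ℝ × ℝ → ℂ} (hf : Periodic2 f) (hc : Continuous f) :
    ∃ F : C(UnitAddTorus (Fin 2), ℂ),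
      ∀ t : Fin 2 → ℝ, F (fun i => (t i : UnitAddCircle)) = f (twoPiDilation t) := by
  let mk : C(Fin 2 → ℝ, UnitAddTorus (Fin 2)) :=
    ⟨Pi.map fun _ => ((↑) : ℝ → UnitAddCircle), by fun_prop⟩
  have isQuotientMap_mk : Topology.IsQuotientMap mk :=
    (IsOpenQuotientMap.piMap fun _ => QuotientAddGroup.isOpenQuotientMap_mk).isQuotientMap
  let f₁ : C(Fin 2 → ℝ, ℂ) := ⟨fun t => f (twoPiDilation t), by unfold twoPiDilation; fun_prop⟩
  have factorsThrough : Function.FactorsThrough f₁ mk := fun s t hst => by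
    have exists_int_sub_eq (i : Fin 2) : ∃ m : ℤ, (m : ℝ) = s i - t i := by
      have coe_sub_eq_zero : ((s i - t i : ℝ) : UnitAddCircle) = 0 := by
        rw [AddCircle.coe_sub, sub_eq_zero]
        exact congrFun hst i
      simpa only [zsmul_eq_mul, mul_one] using
        (AddCircle.coe_eq_zero_iff (p := (1 : ℝ))).mp coe_sub_eq_zero
    obtain ⟨m, hm⟩ := exists_int_sub_eq 0
    obtain ⟨n, hn⟩ := exists_int_sub_eq 1
    change f (twoPiDilation s) = f (twoPiDilation t)
    rw [twoPiDilation, twoPiDilation, ← hf.map_add_int_mul (2 * Real.pi * t 0) _ m n, hm, hn]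
    congr 2 <;> ring
  exact ⟨isQuotientMap_mk.lift f₁ factorsThrough,
    fun t => DFunLike.congr_fun (isQuotientMap_mk.lift_comp f₁ factorsThrough) t⟩

lemma setIntegral_comp_twoPiDilation (f : ℝ × ℝ → ℂ) :
    ∫ t in {t : Fin 2 → ℝ | ∀ i, t i ∈ Set.Ioc (-(1 / 2) : ℝ) (-(1 / 2) + 1)},
      f (twoPiDilation t) = 1 / (2 * Real.pi) ^ 2 * ∫ x in Q2, f x := by
  set box : Set (ℝ × ℝ) := Set.Ioc (-(1 / 2)) (-(1 / 2) + 1) ×ˢ Set.Ioc (-(1 / 2)) (-(1 / 2) + 1)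
  have smul_box_ae_eq : (2 * Real.pi) • box =ᵐ[volume] Q2 := by
    have left_eq : (2 * Real.pi) * -(1 / 2) = -Real.pi := by ring
    have right_eq : (2 * Real.pi) * (-(1 / 2) + 1) = Real.pi := by ring
    rw [Set.smul_set_prod, LinearOrderedField.smul_Ioc Real.two_pi_pos, left_eq, right_eq, Q2,
      ← Set.Icc_prod_Icc]
    exact Measure.set_prod_ae_eq Ioc_ae_eq_Icc Ioc_ae_eq_Icc
  calc _ = ∫ t in MeasurableEquiv.finTwoArrow ⁻¹' box,
          f ((2 * Real.pi) • MeasurableEquiv.finTwoArrow t) := by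
        simp only [box, Set.preimage, Set.mem_prod, Fin.forall_fin_two]
        rfl
    _ = ∫ y in box, f ((2 * Real.pi) • y) :=
        (volume_preserving_finTwoArrow ℝ).setIntegral_preimage_emb
          (MeasurableEquiv.measurableEmbedding _) (fun y => f ((2 * Real.pi) • y)) box
    _ = _ := by
        rw [Measure.setIntegral_comp_smul_of_pos _ _ _ Real.two_pi_pos,
          setIntegral_congr_set smul_box_ae_eq]
        simp

lemma mFourierCoeff_eq_fCoeff {f : ℝ × ℝ → ℂ} {F : UnitAddTorus (Fin 2) → ℂ}
    (hF : ∀ t : Fin 2 → ℝ, F (fun i => (t i : UnitAddCircle)) = f (twoPiDilation t))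
    (n : Fin 2 → ℤ) : UnitAddTorus.mFourierCoeff F n = fCoeff f (n 0, n 1) := by
  rw [UnitAddTorus.mFourierCoeff_eq_integral F n fun _ => -(1 / 2), fCoeff_eq_integral_torusChar,
    ← setIntegral_comp_twoPiDilation]
  simp only [hF, mFourier_coe, smul_eq_mul, mul_comm]
  rfl

theorem TorusSmooth.hasSum_fCoeff_mul_torusChar {f : ℝ × ℝ → ℂ} (hf : TorusSmooth f) (x : ℝ × ℝ) :
    HasSum (fun k => fCoeff f k * torusChar k x) (f x) := by
  obtain ⟨F, hF⟩ := hf.periodic.exists_unitAddTorus_lift hf.contDiff.continuous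
  obtain ⟨t, rfl⟩ := twoPiDilation_surjective x
  have summable : Summable (UnitAddTorus.mFourierCoeff F) :=
    ((finTwoArrowEquiv ℤ).summable_iff.mpr hf.summable_fCoeff).congr fun n =>
      (mFourierCoeff_eq_fCoeff hF n).symm
  have series := UnitAddTorus.hasSum_mFourier_series_apply_of_summable summable
    fun i => (t i : UnitAddCircle)
  simp only [mFourierCoeff_eq_fCoeff hF, mFourier_coe, hF, smul_eq_mul] at series
  exact (finTwoArrowEquiv ℤ).hasSum_iff.mp series

/-! ### Multipliers with symbols of polynomial growth -/

/-- A symbol on `ℤ²` of at most polynomial growth; the corresponding multiplier acts on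
`C^∞(𝕋²)`. -/
def PolyGrowth (m : Z2 → ℂ) : Prop := ∃ d : ℕ, m =O[⊤] fun k => weight k ^ d

lemma PolyGrowth.of_norm_le {m : Z2 → ℂ} {C : ℝ} (hm : ∀ k, ‖m k‖ ≤ C) : PolyGrowth m :=
  ⟨0, isBigO_top.mpr ⟨C, by simpa using hm⟩⟩

lemma PolyGrowth.mul {m₁ m₂ : Z2 → ℂ} (h₁ : PolyGrowth m₁) (h₂ : PolyGrowth m₂) :
    PolyGrowth fun k => m₁ k * m₂ k := by
  obtain ⟨d₁, hd₁⟩ := h₁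
  obtain ⟨d₂, hd₂⟩ := h₂
  exact ⟨d₁ + d₂, by simpa only [pow_add] using hd₁.mul hd₂⟩

lemma polyGrowth_weight : PolyGrowth fun k => (weight k : ℂ) :=
  ⟨1, isBigO_top.mpr ⟨1, by simp⟩⟩

lemma polyGrowth_dotZ (v : ℝ × ℝ) : PolyGrowth fun k => I * (dotZ k v : ℝ) :=
  ⟨1, isBigO_top.mpr ⟨2 * ‖v‖, fun k => by
    simpa [abs_of_pos (weight_pos k)] using abs_dotZ_le k v⟩⟩

lemma periodic2_Tmult (m : Z2 → ℂ) (f : ℝ × ℝ → ℂ) : Periodic2 (Tmult m f) := fun x =>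
  ⟨tsum_congr fun k => congrArg _ (periodic2_torusChar k x).1,
    tsum_congr fun k => congrArg _ (periodic2_torusChar k x).2⟩

section Multiplier

variable {f : ℝ × ℝ → ℂ} {m : Z2 → ℂ}

lemma PolyGrowth.summable_mul_fCoeff (hm : PolyGrowth m) (hf : TorusSmooth f) :
    Summable fun k => m k * fCoeff f k := by
  obtain ⟨d, hd⟩ := hm
  refine summable_of_isBigO (hf.summable_weight_pow_mul_fCoeff d).norm (.mono ?_ le_top)
  simpa [abs_of_pos (weight_pos _)] using hd.mul (isBigO_refl (fCoeff f) ⊤).norm_right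

lemma PolyGrowth.summable_norm_weight_mul_fCoeff (hm : PolyGrowth m) (hf : TorusSmooth f) :
    Summable fun k => 2 * weight k * ‖m k * fCoeff f k‖ :=
  (((polyGrowth_weight.mul hm).summable_mul_fCoeff hf).norm.mul_left 2).congr fun k => by
    rw [mul_assoc, norm_mul, norm_real, Real.norm_of_nonneg (weight_pos k).le, mul_assoc]

lemma hasFDerivAt_Tmult (hm : PolyGrowth m) (hf : TorusSmooth f) (x : ℝ × ℝ) :
    HasFDerivAt (Tmult m f) (∑' k, (m k * fCoeff f k) •
      torusChar k x • I • ofRealCLM.comp (dotCLM k)) x := by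
  have summable_zero : Summable fun k => m k * fCoeff f k * torusChar k 0 := by
    simpa [torusChar, dotZ] using hm.summable_mul_fCoeff hf
  exact hasFDerivAt_tsum (hm.summable_norm_weight_mul_fCoeff hf)
    (fun k y => (hasFDerivAt_torusChar k y).const_mul (m k * fCoeff f k))
    (fun k y => norm_smul_fderiv_torusChar_le k y (m k * fCoeff f k))
    summable_zero x

lemma hasSum_dirD_Tmult (hm : PolyGrowth m) (hf : TorusSmooth f) (v x : ℝ × ℝ) :
    HasSum (fun k => I * (dotZ k v : ℝ) * m k * fCoeff f k * torusChar k x)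
      (dirD v (Tmult m f) x) := by
  have summable : Summable fun k => (m k * fCoeff f k) •
      torusChar k x • I • ofRealCLM.comp (dotCLM k) :=
    .of_norm_bounded (hm.summable_norm_weight_mul_fCoeff hf) fun k =>
      norm_smul_fderiv_torusChar_le k x (m k * fCoeff f k)
  rw [dirD, (hasFDerivAt_Tmult hm hf x).fderiv]
  refine (summable.hasSum.mapL (ContinuousLinearMap.apply ℝ ℂ v)).congr_fun fun k => ?_
  simp only [ContinuousLinearMap.apply_apply, smul_apply, ContinuousLinearMap.comp_apply,
    dotCLM_apply, ofRealCLM_apply, smul_eq_mul]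
  ring

lemma dirD_Tmult (hm : PolyGrowth m) (hf : TorusSmooth f) (v : ℝ × ℝ) :
    dirD v (Tmult m f) = Tmult (fun k => I * (dotZ k v : ℝ) * m k) f :=
  funext fun x => (hasSum_dirD_Tmult hm hf v x).tsum_eq.symm

lemma contDiff_nat_Tmult (hm : PolyGrowth m) (hf : TorusSmooth f) (n : ℕ) :
    ContDiff ℝ n (Tmult m f) := by
  have differentiable {m : Z2 → ℂ} (hm : PolyGrowth m) : Differentiable ℝ (Tmult m f) :=
    fun x => (hasFDerivAt_Tmult hm hf x).differentiableAt
  induction n generalizing m with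
  | zero => exact contDiff_zero.mpr (differentiable hm).continuous
  | succ n ih =>
    rw [Nat.cast_succ, contDiff_succ_iff_fderiv_apply]
    refine ⟨differentiable hm, by simp, fun v => ?_⟩
    change ContDiff ℝ n (dirD v (Tmult m f))
    rw [dirD_Tmult hm hf]
    exact ih ((polyGrowth_dotZ v).mul hm)

protected theorem TorusSmooth.Tmult (hm : PolyGrowth m) (hf : TorusSmooth f) :
    TorusSmooth (Tmult m f) :=
  ⟨contDiff_infty.mpr (contDiff_nat_Tmult hm hf), periodic2_Tmult m f⟩

end Multiplier

lemma RealValued.conj_fCoeff {f : ℝ × ℝ → ℂ} (hf : RealValued f) (k : Z2) :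
    conj (fCoeff f k) = fCoeff f (-k) := by
  simp only [fCoeff_eq_integral_torusChar, map_mul, ← integral_conj, conj_torusChar,
    conj_eq_iff_im.mpr (hf _)]
  simp only [map_div₀, map_pow, map_mul, map_one, map_ofNat, conj_ofReal]

protected theorem RealValued.Tmult {m : Z2 → ℂ} {f : ℝ × ℝ → ℂ} (hm : ∀ k, conj (m k) = m (-k))
    (hf : RealValued f) : RealValued (Tmult m f) := fun x => by
  refine conj_eq_iff_im.mp ?_
  calc conj (Tmult m f x) = ∑' k, m (-k) * fCoeff f (-k) * torusChar (-k) x := by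
        rw [Tmult, conj_tsum]
        exact tsum_congr fun k => by
          rw [map_mul, map_mul, hm, hf.conj_fCoeff, ← conj_torusChar, torusChar]
    _ = Tmult m f x := (Equiv.neg Z2).tsum_eq fun k => m k * fCoeff f k * torusChar k x

/-! ### The pressure -/

/-- The symbols `(α (k₂² - k₁²) + β k₁k₂) / |k|²`, homogeneous of degree zero with a harmonic
numerator. At `k = 0` the quotient is `0 / 0 = 0`, which is the value wanted there. -/
def harmonicSym (α β : ℝ) (k : Z2) : ℝ :=
  (α * ((k.2 : ℝ) ^ 2 - (k.1 : ℝ) ^ 2) + β * ((k.1 : ℝ) * k.2)) / ((k.1 : ℝ) ^ 2 + (k.2 : ℝ) ^ 2)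

lemma harmonicSym_neg (α β : ℝ) (k : Z2) : harmonicSym α β (-k) = harmonicSym α β k := by
  simp [harmonicSym]

lemma abs_harmonicSym_le (α β : ℝ) (k : Z2) : |harmonicSym α β k| ≤ |α| + |β| := by
  rw [harmonicSym]
  generalize (k.1 : ℝ) = a, (k.2 : ℝ) = b
  have abs_sub_le : |b ^ 2 - a ^ 2| ≤ a ^ 2 + b ^ 2 :=
    abs_le.mpr ⟨by nlinarith, by nlinarith⟩
  have abs_mul_le : |a * b| ≤ a ^ 2 + b ^ 2 :=
    abs_le.mpr ⟨by nlinarith [sq_nonneg (a + b)], by nlinarith [sq_nonneg (a - b)]⟩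
  rw [abs_div, abs_of_nonneg (by positivity : 0 ≤ a ^ 2 + b ^ 2)]
  refine div_le_of_le_mul₀ (by positivity) (by positivity) ?_
  calc |α * (b ^ 2 - a ^ 2) + β * (a * b)| ≤ |α| * |b ^ 2 - a ^ 2| + |β| * |a * b| := by
        rw [← abs_mul, ← abs_mul]
        exact abs_add_le _ _
    _ ≤ |α| * (a ^ 2 + b ^ 2) + |β| * (a ^ 2 + b ^ 2) := by gcongr
    _ = (|α| + |β|) * (a ^ 2 + b ^ 2) := by ring

lemma polyGrowth_harmonicSym (α β : ℝ) : PolyGrowth fun k => (harmonicSym α β k : ℂ) :=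
  .of_norm_le fun k => by simpa using abs_harmonicSym_le α β k

lemma RoSym_zero : RoSym 0 = harmonicSym (25 / 12) 0 := by
  funext k
  by_cases hk : k = 0
  · simp [hk, RoSym, harmonicSym]
  · simp only [RoSym, hk, harmonicSym, if_true, if_false, div_eq_mul_inv, mul_inv]
    ring

lemma RoSym_one : RoSym 1 = harmonicSym (7 / 12) 4 := by
  funext k
  by_cases hk : k = 0
  · simp [hk, RoSym, harmonicSym]
  · simp only [RoSym, hk, harmonicSym, if_false, one_ne_zero, div_eq_mul_inv, mul_inv]
    ring

lemma exists_RoSym_eq_harmonicSym (j : Fin 2) : ∃ α β, RoSym j = harmonicSym α β := by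
  fin_cases j
  exacts [⟨_, _, RoSym_zero⟩, ⟨_, _, RoSym_one⟩]

lemma polyGrowth_RoSym (j : Fin 2) : PolyGrowth fun k => (RoSym j k : ℂ) := by
  obtain ⟨α, β, h⟩ := exists_RoSym_eq_harmonicSym j
  simpa only [h] using polyGrowth_harmonicSym α β

protected lemma RealValued.Ro {q : ℝ × ℝ → ℂ} (hq : RealValued q) (j : Fin 2) :
    RealValued (Ro j q) := by
  obtain ⟨α, β, h⟩ := exists_RoSym_eq_harmonicSym j
  exact hq.Tmult fun k => by rw [conj_ofReal, h, harmonicSym_neg]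

/-- The symbol of the pressure, `-∑ⱼ (lⱼ·k)² mⱼ(k) / |k|²` with `mⱼ` the symbol of `Rⱼᵒ`, after
cancelling a factor `|k|²`. -/
def pressureSym : Z2 → ℝ := harmonicSym (-4 / 3) (-2)

/-- The scalar `p` of the matching identity. -/
def pressure (q : ℝ × ℝ → ℂ) : ℝ × ℝ → ℂ := Tmult (fun k => (pressureSym k : ℂ)) q

lemma torusSmooth_pressure {q : ℝ × ℝ → ℂ} (hq : TorusSmooth q) : TorusSmooth (pressure q) :=
  .Tmult (polyGrowth_harmonicSym _ _) hq

lemma dotZ_sub_sum_perp_eq (k : Z2) (w : ℝ × ℝ) :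
    dotZ k w - (((perp l1).1 * w.1 + (perp l1).2 * w.2) * (dotZ k l1 * RoSym 0 k)
      + ((perp l2).1 * w.1 + (perp l2).2 * w.2) * (dotZ k l2 * RoSym 1 k))
      = -(dotZ k (perp w) * pressureSym k) := by
  by_cases hk : k = 0
  · simp [hk, dotZ]
  have normSq_ne_zero : (k.1 : ℝ) ^ 2 + (k.2 : ℝ) ^ 2 ≠ 0 := by
    simpa [Prod.ext_iff, add_eq_zero_iff_of_nonneg, sq_nonneg] using hk
  simp only [RoSym_zero, RoSym_one, pressureSym, harmonicSym, dotZ, perp, l1, l2]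
  field_simp
  ring

theorem dirD_sub_sum_perp_eq {q : ℝ × ℝ → ℂ} (hq : TorusSmooth q) (w x : ℝ × ℝ) :
    dirD w q x
      - (((perp l1).1 * w.1 + (perp l1).2 * w.2 : ℝ) * dirD l1 (Ro 0 q) x
        + ((perp l2).1 * w.1 + (perp l2).2 * w.2 : ℝ) * dirD l2 (Ro 1 q) x)
      = -dirD (perp w) (pressure q) x := by
  have hasSum_q := (hq.dirD w).hasSum_fCoeff_mul_torusChar x
  have hasSum_Ro (j : Fin 2) (l : ℝ × ℝ) := hasSum_dirD_Tmult (polyGrowth_RoSym j) hq l x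
  have hasSum_pressure : HasSum _ (dirD (perp w) (pressure q) x) :=
    hasSum_dirD_Tmult (polyGrowth_harmonicSym _ _) hq (perp w) x
  refine (hasSum_q.sub (((hasSum_Ro 0 l1).mul_left _).add ((hasSum_Ro 1 l2).mul_left _))).unique
    (hasSum_pressure.neg.congr_fun fun k => ?_)
  have symbol_eq := congrArg ((↑) : ℝ → ℂ) (dotZ_sub_sum_perp_eq k w)
  push_cast [pressureSym] at symbol_eq
  rw [hq.fCoeff_dirD]
  push_cast
  linear_combination I * fCoeff q k * torusChar k x * symbol_eq

/-! ### The amplitudes -/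

lemma aPerf_sq {q : ℝ × ℝ → ℂ} (hq : RealValued q) {r den C₀ : ℝ} (hr : 0 < r) (hden : 0 < den)
    {j : Fin 2} {x : ℝ × ℝ} (h : 0 ≤ C₀ + (Ro j q x).re / r) :
    aPerf q r den C₀ j x ^ 2 = (4 / den : ℝ) • Ro j q x + (4 * r * C₀ / den : ℝ) := by
  have ofReal_re_Ro : ((Ro j q x).re : ℂ) = Ro j q x := conj_eq_iff_re.mp
    (conj_eq_iff_im.mpr (hq.Ro j x))
  rw [aPerf, ← ofReal_pow, mul_pow, mul_pow, Real.sq_sqrt h, Real.sq_sqrt (by positivity),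
    ← ofReal_re_Ro, real_smul, ofReal_re, ← ofReal_mul, ← ofReal_add]
  congr 1
  field_simp
  ring

lemma dirD_aPerf_sq {q : ℝ × ℝ → ℂ} (hq : RealValued q) {r den C₀ : ℝ} (hr : 0 < r)
    (hden : 0 < den) {j : Fin 2} (h : ∀ x, 0 ≤ C₀ + (Ro j q x).re / r) (v x : ℝ × ℝ) :
    dirD v (fun y => aPerf q r den C₀ j y ^ 2) x = (4 / den : ℝ) • dirD v (Ro j q) x := by
  simp only [aPerf_sq hq hr hden (h _), dirD, fderiv_add_const]
  exact congrArg (· v) (congrFun (fderiv_const_smul_field (𝕜 := ℝ) (f := Ro j q) (4 / den)) x)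

lemma radicand_nonneg {C r : ℝ} {z : ℂ} (hC : 1 ≤ C) (hr : 0 < r) (hz : ‖z‖ ≤ r) :
    0 ≤ C + z.re / r := by
  have : -1 ≤ z.re / r := by
    rw [le_div_iff₀ hr]
    linarith [neg_le_of_abs_le (abs_re_le_norm z)]
  linarith

theorem stmt7_general (q : ℝ × ℝ → ℂ) (hq : ContDiff ℝ (⊤ : ℕ∞) q) (hqp : Periodic2 q)
    (hqr : RealValued q) (C₀ r lam : ℝ) (hr : 0 < r) (hlam : 0 < lam)
    (hrad : ∀ j : Fin 2, ∀ x, 0 ≤ C₀ + (Ro j q x).re / r) :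
    ∃ p : ℝ × ℝ → ℂ, ContDiff ℝ (⊤ : ℕ∞) p ∧ Periodic2 p ∧
      ∀ x : ℝ × ℝ,
        (-(1 / 4 : ℂ)) * ((5 * lam : ℝ) : ℂ) *
            (((perp l1).1 : ℂ) * dirD l1 (fun y => (aPerf q r (5 * lam) C₀ 0 y) ^ 2) x
              + ((perp l2).1 : ℂ) * dirD l2 (fun y => (aPerf q r (5 * lam) C₀ 1 y) ^ 2) x)
          + pd 0 q x = -(pd 1 p x) ∧
        (-(1 / 4 : ℂ)) * ((5 * lam : ℝ) : ℂ) *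
            (((perp l1).2 : ℂ) * dirD l1 (fun y => (aPerf q r (5 * lam) C₀ 0 y) ^ 2) x
              + ((perp l2).2 : ℂ) * dirD l2 (fun y => (aPerf q r (5 * lam) C₀ 1 y) ^ 2) x)
          + pd 1 q x = pd 0 p x := by
  have hsmooth : TorusSmooth q := ⟨hq, hqp⟩
  have hpressure := torusSmooth_pressure hsmooth
  refine ⟨pressure q, hpressure.contDiff, hpressure.periodic, fun x => ?_⟩
  have fst_eq := dirD_sub_sum_perp_eq hsmooth (1, 0) x
  have snd_eq := dirD_sub_sum_perp_eq hsmooth (0, 1) x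
  have perp_fst : perp (1, 0) = (0, 1) := by simp only [perp, neg_zero]
  have dirD_perp_snd : dirD (perp (0, 1)) (pressure q) x = -dirD (1, 0) (pressure q) x := by
    simp [dirD, perp, ← map_neg]
  have hden : 0 < 5 * lam := by positivity
  have prefactor_eq : -(1 / 4) * (5 * lam : ℂ) * (4 / (5 * lam)) = -1 := by
    have : (lam : ℂ) ≠ 0 := ofReal_ne_zero.mpr hlam.ne'
    field_simp
  rw [perp_fst] at fst_eq
  rw [dirD_perp_snd] at snd_eq
  simp only [dirD_aPerf_sq hqr hr hden (hrad _), real_smul, pd, if_true, one_ne_zero, if_false]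
  push_cast at fst_eq snd_eq ⊢
  constructor
  · linear_combination fst_eq + (((perp l1).1 : ℂ) * dirD l1 (Ro 0 q) x
      + ((perp l2).1 : ℂ) * dirD l2 (Ro 1 q) x) * prefactor_eq
  · linear_combination snd_eq + (((perp l1).2 : ℂ) * dirD l1 (Ro 0 q) x
      + ((perp l2).2 : ℂ) * dirD l2 (Ro 1 q) x) * prefactor_eq

/-- Proposition 3.3, matching: with
`a_j = 2√(r/(5λ)) √(C₀ + R_j^o(q)/r)`, one has
`−(1/4)(5λ) ∑_j l_j^⊥ (l_j·∇)(a_j²) + ∇q = ∇^⊥ p` for some smooth scalar `p`. -/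
theorem stmt7 (q : ℝ × ℝ → ℂ) (hq : ContDiff ℝ (⊤ : ℕ∞) q) (hqp : Periodic2 q)
    (hqr : RealValued q) (hq0 : fCoeff q 0 = 0)
    (C₀ r lam : ℝ) (hC₀ : 2 ≤ C₀) (hr : 0 < r) (hlam : 0 < lam)
    (hbound : ∀ j : Fin 2, ∀ x, ‖Ro j q x‖ ≤ r) :
    ∃ p : ℝ × ℝ → ℂ, ContDiff ℝ (⊤ : ℕ∞) p ∧ Periodic2 p ∧
      ∀ x : ℝ × ℝ,
        (-(1 / 4 : ℂ)) * ((5 * lam : ℝ) : ℂ) *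
            (((perp l1).1 : ℂ) * dirD l1 (fun y => (aPerf q r (5 * lam) C₀ 0 y) ^ 2) x
              + ((perp l2).1 : ℂ) * dirD l2 (fun y => (aPerf q r (5 * lam) C₀ 1 y) ^ 2) x)
          + pd 0 q x = -(pd 1 p x) ∧
        (-(1 / 4 : ℂ)) * ((5 * lam : ℝ) : ℂ) *
            (((perp l1).2 : ℂ) * dirD l1 (fun y => (aPerf q r (5 * lam) C₀ 0 y) ^ 2) x
              + ((perp l2).2 : ℂ) * dirD l2 (fun y => (aPerf q r (5 * lam) C₀ 1 y) ^ 2) x)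
          + pd 1 q x = pd 0 p x := by
  exact stmt7_general q hq hqp hqr C₀ r lam hr hlam fun j x =>
    radicand_nonneg ((by norm_num : (1 : ℝ) ≤ 2).trans hC₀) hr (hbound j x)

end
end

section
/- Let m : ℝ² ∖ {0} → ℂ be smooth and homogeneous of degree 0, and let R be the Fourier multiplier operator on 𝕋² with symbol m(k) for k ≠ 0 (annihilating the k = 0 mode). There is a constant C_m such that: if μ ≥ 10 and a : 𝕋² → ℝ has Fourier support contained in {|k| ≤ μ}, then ‖Ra‖_{L^∞(𝕋²)} ≤ C_m ‖a‖_{L^∞(𝕋²)} log μ. -/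
open MeasureTheory Complex Filter

noncomputable section

/-!
Write the symbol as a telescoping sum `m = ∑ⱼ φ (2⁻ʲ ·)`, where `φ = (χ - χ (2 ·)) m` for a bump
function `χ`; by homogeneity of `m` all the pieces are dilates of the single function `φ`, which is
smooth and compactly supported, hence the inverse Fourier transform of an integrable `g`. The
multiplier with symbol `φ (t ·)` averages the translates of `a` by `2πtv` against `g v`, so it is
bounded on `L^∞` by `‖g‖₁`, independently of `t`. On frequencies `1 ≤ |k| ≤ μ` only `O(log μ)`
values of `j` contribute.
-/

open scoped FourierTransform

/-- The plane wave `e^{ik⋅x}` of frequency `k`, in terms of which Fourier series on the torus are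
written. -/
def planeWave (k : Z2) (x : ℝ × ℝ) : ℂ := Complex.exp (Complex.I * (dotZ k x : ℝ))

lemma planeWave_add (k : Z2) (x y : ℝ × ℝ) :
    planeWave k (x + y) = planeWave k x * planeWave k y := by
  simp only [planeWave, dotZ, ← Complex.exp_add, Prod.fst_add, Prod.snd_add]
  push_cast
  ring_nf

lemma norm_planeWave (k : Z2) (x : ℝ × ℝ) : ‖planeWave k x‖ = 1 := by
  rw [planeWave, mul_comm, Complex.norm_exp_ofReal_mul_I]

lemma continuous_planeWave (k : Z2) : Continuous (planeWave k) := by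
  unfold planeWave dotZ
  fun_prop

section FourierSeries

variable {a : ℝ × ℝ → ℂ}

lemma Periodic2.add_int_mul (hp : Periodic2 a) (m n : ℤ) (x : ℝ × ℝ) :
    a (x.1 + m * (2 * Real.pi), x.2 + n * (2 * Real.pi)) = a x := by
  have hfst (s : ℝ) : Function.Periodic (fun r => a (r, s)) (2 * Real.pi) := fun r => (hp (r, s)).1
  have hsnd (r : ℝ) : Function.Periodic (fun s => a (r, s)) (2 * Real.pi) := fun s => (hp (r, s)).2
  exact ((hfst _).int_mul m x.1).trans ((hsnd x.1).int_mul n x.2)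

/-- The quotient map from the plane to Mathlib's torus `(ℝ/ℤ)²`, normalised so that the functions on
`(ℝ/ℤ)²` correspond to the functions on the plane that are `2π`-periodic in both variables. -/
def torusMk (x : ℝ × ℝ) : UnitAddTorus (Fin 2) :=
  Pi.map (fun _ => ((↑) : ℝ → UnitAddCircle)) ((finTwoArrowEquiv ℝ).symm ((2 * Real.pi)⁻¹ • x))

lemma isOpenQuotientMap_torusMk : IsOpenQuotientMap torusMk :=
  (IsOpenQuotientMap.piMap fun _ => QuotientAddGroup.isOpenQuotientMap_mk).comp <|
    (Homeomorph.finTwoArrow.symm.isOpenQuotientMap).comp <|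
      (Homeomorph.smulOfNeZero _ (inv_ne_zero Real.two_pi_pos.ne')).isOpenQuotientMap

lemma exists_int_mul_of_torusMk_eq {x y : ℝ × ℝ} (h : torusMk x = torusMk y) :
    ∃ m n : ℤ, y = (x.1 + m * (2 * Real.pi), x.2 + n * (2 * Real.pi)) := by
  have hcoord {s t : ℝ} (hst : (((2 * Real.pi)⁻¹ * s : ℝ) : UnitAddCircle) =
      ((2 * Real.pi)⁻¹ * t : ℝ)) : ∃ n : ℤ, t = s + n * (2 * Real.pi) := by
    obtain ⟨n, hn⟩ := AddSubgroup.mem_zmultiples_iff.1 (QuotientAddGroup.eq.1 hst)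
    rw [zsmul_one] at hn
    exact ⟨n, by rw [hn]; field_simp; ring⟩
  obtain ⟨m, hm⟩ := hcoord (congrFun h 0)
  obtain ⟨n, hn⟩ := hcoord (congrFun h 1)
  exact ⟨m, n, Prod.ext hm hn⟩

lemma Periodic2.exists_torusLift (hp : Periodic2 a) (hc : Continuous a) :
    ∃ F : C(UnitAddTorus (Fin 2), ℂ), ∀ x, F (torusMk x) = a x := by
  let q : C(ℝ × ℝ, UnitAddTorus (Fin 2)) := ⟨torusMk, isOpenQuotientMap_torusMk.continuous⟩
  have hq : Topology.IsQuotientMap q := isOpenQuotientMap_torusMk.isQuotientMap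
  have hfact : Function.FactorsThrough (⟨a, hc⟩ : C(ℝ × ℝ, ℂ)) q := by
    intro x y hxy
    obtain ⟨m, n, rfl⟩ := exists_int_mul_of_torusMk_eq hxy
    exact (hp.add_int_mul m n x).symm
  exact ⟨hq.lift ⟨a, hc⟩ hfact, DFunLike.congr_fun (hq.lift_comp ⟨a, hc⟩ hfact)⟩

lemma Periodic2.norm_le_supNorm (hp : Periodic2 a) (hc : Continuous a) (x : ℝ × ℝ) :
    ‖a x‖ ≤ supNorm a := by
  obtain ⟨F, hF⟩ := hp.exists_torusLift hc
  refine le_ciSup (f := fun y => ‖a y‖) ⟨‖F‖, ?_⟩ x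
  rintro _ ⟨y, rfl⟩
  exact (congrArg norm (hF y)).symm.trans_le (F.norm_coe_le_norm _)

lemma mFourier_torusMk (k : Fin 2 → ℤ) (x : ℝ × ℝ) :
    UnitAddTorus.mFourier k (torusMk x) = planeWave (finTwoArrowEquiv ℤ k) x := by
  simp only [UnitAddTorus.mFourier, torusMk, ContinuousMap.coe_mk, Fin.prod_univ_two,
    Pi.map_apply, fourier_coe_apply, ← Complex.exp_add, planeWave, dotZ, finTwoArrowEquiv_apply,
    Equiv.toFun_as_coe, piFinTwoEquiv_apply]
  congr 1
  simp only [finTwoArrowEquiv_symm_apply, Prod.smul_fst, Prod.smul_snd, smul_eq_mul, mul_inv_rev,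
    Matrix.cons_val_zero, Matrix.cons_val_one, Matrix.cons_val_fin_one]
  push_cast
  field_simp

open scoped Pointwise in
lemma smul_Icc_half_eq_Q2 :
    (2 * Real.pi) • Set.Icc ((-1 / 2, -1 / 2) : ℝ × ℝ) (1 / 2, 1 / 2) = Q2 := by
  have himage := (OrderIso.smulRight (β := ℝ × ℝ) Real.two_pi_pos).image_Icc (-1 / 2, -1 / 2)
    (1 / 2, 1 / 2)
  refine himage.trans ?_
  rw [Q2]
  congr 1 <;> ext <;> simp only [OrderIso.smulRight_apply, Prod.smul_mk, smul_eq_mul] <;> ring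

lemma unitBox_ae_eq_preimage_Icc :
    {t : Fin 2 → ℝ | ∀ i, t i ∈ Set.Ioc (-1 / 2 : ℝ) (-1 / 2 + 1)} =ᵐ[volume]
      MeasurableEquiv.finTwoArrow ⁻¹' Set.Icc ((-1 / 2, -1 / 2) : ℝ × ℝ) (1 / 2, 1 / 2) := by
  have hIoc : {t : Fin 2 → ℝ | ∀ i, t i ∈ Set.Ioc (-1 / 2 : ℝ) (-1 / 2 + 1)}
      = Set.univ.pi fun _ => Set.Ioc (-1 / 2 : ℝ) (1 / 2) := by
    norm_num [Set.pi]
  have hIcc : MeasurableEquiv.finTwoArrow ⁻¹' Set.Icc ((-1 / 2, -1 / 2) : ℝ × ℝ) (1 / 2, 1 / 2)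
      = Set.Icc (fun _ => -1 / 2) (fun _ => 1 / 2) := by
    ext t
    simp [Prod.le_def, Pi.le_def, Fin.forall_fin_two, MeasurableEquiv.finTwoArrow]
  rw [hIoc, hIcc]
  exact Measure.univ_pi_Ioc_ae_eq_Icc

lemma setIntegral_unitBox_eq_setIntegral_Q2 {E : Type*} [NormedAddCommGroup E] [NormedSpace ℝ E]
    (f : UnitAddTorus (Fin 2) → E) :
    ∫ t : Fin 2 → ℝ in {t | ∀ i, t i ∈ Set.Ioc (-1 / 2 : ℝ) (-1 / 2 + 1)}, f (fun i => t i)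
      = ((2 * Real.pi) ^ 2)⁻¹ • ∫ x in Q2, f (torusMk x) := by
  have htorus (t : Fin 2 → ℝ) : torusMk ((2 * Real.pi) • MeasurableEquiv.finTwoArrow t)
      = fun i => (t i : UnitAddCircle) := by
    funext i
    rw [torusMk, inv_smul_smul₀ Real.two_pi_pos.ne']
    fin_cases i <;> rfl
  calc _ = ∫ t in MeasurableEquiv.finTwoArrow ⁻¹'
          Set.Icc ((-1 / 2, -1 / 2) : ℝ × ℝ) (1 / 2, 1 / 2),
          f (torusMk ((2 * Real.pi) • MeasurableEquiv.finTwoArrow t)) := by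
        simp only [htorus, setIntegral_congr_set unitBox_ae_eq_preimage_Icc]
    _ = ∫ x in Set.Icc ((-1 / 2, -1 / 2) : ℝ × ℝ) (1 / 2, 1 / 2),
          f (torusMk ((2 * Real.pi) • x)) :=
        (volume_preserving_finTwoArrow ℝ).setIntegral_preimage_emb
          MeasurableEquiv.finTwoArrow.measurableEmbedding
          (fun x => f (torusMk ((2 * Real.pi) • x))) _
    _ = ((2 * Real.pi) ^ 2)⁻¹ • ∫ x in Q2, f (torusMk x) := by
        rw [Measure.setIntegral_comp_smul_of_pos _ (f <| torusMk ·) _ Real.two_pi_pos,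
          smul_Icc_half_eq_Q2, Module.finrank_prod, Module.finrank_self]

lemma mFourierCoeff_eq_fCoeff_s9 {F : UnitAddTorus (Fin 2) → ℂ} (hF : ∀ x, F (torusMk x) = a x)
    (k : Fin 2 → ℤ) :
    UnitAddTorus.mFourierCoeff F k = fCoeff a (finTwoArrowEquiv ℤ k) := by
  have hwave (x : ℝ × ℝ) : planeWave (finTwoArrowEquiv ℤ (-k)) x
      = Complex.exp (-Complex.I * (dotZ (finTwoArrowEquiv ℤ k) x : ℝ)) := by
    simp only [planeWave, dotZ, finTwoArrowEquiv_apply, Equiv.toFun_as_coe, piFinTwoEquiv_apply,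
      Pi.neg_apply]
    push_cast
    ring_nf
  rw [UnitAddTorus.mFourierCoeff_eq_integral F k fun _ => -1 / 2,
    setIntegral_unitBox_eq_setIntegral_Q2 (fun z => UnitAddTorus.mFourier (-k) z • F z), fCoeff,
    Complex.real_smul]
  simp only [mFourier_torusMk, hF, smul_eq_mul, hwave, mul_comm (a _)]
  simp

theorem Periodic2.hasSum_fourierSeries (hp : Periodic2 a) (hc : Continuous a)
    (hs : Summable (fCoeff a)) (x : ℝ × ℝ) :
    HasSum (fun k => fCoeff a k * planeWave k x) (a x) := by
  obtain ⟨F, hF⟩ := hp.exists_torusLift hc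
  have hcoeff : UnitAddTorus.mFourierCoeff F = fCoeff a ∘ finTwoArrowEquiv ℤ :=
    funext (mFourierCoeff_eq_fCoeff_s9 hF)
  have hsum := UnitAddTorus.hasSum_mFourier_series_apply_of_summable (f := F)
    (hcoeff ▸ (finTwoArrowEquiv ℤ).summable_iff.2 hs) (torusMk x)
  simp only [hF, mFourier_torusMk, hcoeff] at hsum
  exact (finTwoArrowEquiv ℤ).hasSum_iff.1 hsum

end FourierSeries

section Multiplier

variable {a : ℝ × ℝ → ℂ}

lemma finite_setOf_knorm_le (μ : ℝ) : {k : Z2 | knorm k ≤ μ}.Finite := by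
  refine (isCompact_closedBall (0 : Z2) μ).finite_of_discrete.subset fun k hk => ?_
  have hfst : |(k.1 : ℝ)| ≤ knorm k := Real.abs_le_sqrt (by nlinarith [sq_nonneg (k.2 : ℝ)])
  have hsnd : |(k.2 : ℝ)| ≤ knorm k := Real.abs_le_sqrt (by nlinarith [sq_nonneg (k.1 : ℝ)])
  simpa [Prod.norm_def, Int.norm_eq_abs] using ⟨hfst.trans hk, hsnd.trans hk⟩

lemma one_le_knorm {k : Z2} (hk : k ≠ 0) : 1 ≤ knorm k := by
  have hsq : 1 ≤ k.1 ^ 2 + k.2 ^ 2 := by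
    contrapose! hk
    have hfst : k.1 ^ 2 = 0 := by linarith [sq_nonneg k.1, sq_nonneg k.2]
    have hsnd : k.2 ^ 2 = 0 := by linarith [sq_nonneg k.1, sq_nonneg k.2]
    exact Prod.ext (sq_eq_zero_iff.1 hfst) (sq_eq_zero_iff.1 hsnd)
  exact Real.one_le_sqrt.2 (mod_cast hsq)

lemma hasFiniteSupport_fCoeff {μ : ℝ} (ha : ∀ k, μ < knorm k → fCoeff a k = 0) :
    (fCoeff a).HasFiniteSupport := by
  refine (finite_setOf_knorm_le μ).subset fun k hk => ?_
  exact not_lt.1 (mt (ha k) hk)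

lemma Tmult_congr {σ τ : Z2 → ℂ} (h : ∀ k, fCoeff a k ≠ 0 → σ k = τ k) :
    Tmult σ a = Tmult τ a := by
  funext x
  refine tsum_congr fun k => ?_
  by_cases hk : fCoeff a k = 0
  · simp only [hk, mul_zero]
  · rw [h k hk]

lemma Tmult_finset_sum {ι : Type*} (s : Finset ι) (σ : ι → Z2 → ℂ)
    (ha : (fCoeff a).HasFiniteSupport) (x : ℝ × ℝ) :
    Tmult (fun k => ∑ i ∈ s, σ i k) a x = ∑ i ∈ s, Tmult (σ i) a x := by
  have hsummable (i : ι) :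
      Summable fun k => σ i k * fCoeff a k * Complex.exp (Complex.I * (dotZ k x : ℝ)) :=
    summable_of_hasFiniteSupport <| ha.subset fun k => mt fun hk => by
      simp only [hk, mul_zero, zero_mul]
  simp only [Tmult, Finset.sum_mul]
  exact Summable.tsum_finsetSum fun i _ => hsummable i

/-- The plane with its Euclidean norm, on which the Fourier transform of a symbol lives; the
product `ℝ × ℝ` itself carries the sup norm. -/
abbrev EuclideanPlane : Type := WithLp 2 (ℝ × ℝ)

/-- The frequency `k`, seen as a vector of the Euclidean plane. -/
def freqVec (k : Z2) : EuclideanPlane := WithLp.toLp 2 (toR k)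

lemma norm_freqVec (k : Z2) : ‖freqVec k‖ = knorm k := by
  simp [freqVec, toR, knorm, WithLp.prod_norm_eq_of_L2]

lemma planeWave_smul_ofLp (k : Z2) (t : ℝ) (v : EuclideanPlane) :
    planeWave k ((2 * Real.pi * t) • v.ofLp)
      = Complex.exp ((2 * Real.pi * inner ℝ v (t • freqVec k) : ℝ) * Complex.I) := by
  simp only [planeWave, dotZ, freqVec, toR, Prod.smul_fst, Prod.smul_snd, smul_eq_mul,
    WithLp.prod_inner_apply, WithLp.ofLp_smul, WithLp.ofLp_fst, WithLp.ofLp_snd,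
    RCLike.inner_apply, Real.ringHom_apply]
  push_cast
  ring_nf

-- The multiplier `e^{2πit⟨v, k⟩}` is the translation by `2πtv`.
theorem Tmult_fourierInv_eq_integral (hp : Periodic2 a) (hc : Continuous a)
    (hs : Summable (fCoeff a)) {g : EuclideanPlane → ℂ} (hg : Integrable g) (t : ℝ) (x : ℝ × ℝ) :
    Tmult (fun k => 𝓕⁻ g (t • freqVec k)) a x
      = ∫ v, g v * a (x + (2 * Real.pi * t) • v.ofLp) := by
  let F (k : Z2) (v : EuclideanPlane) : ℂ :=
    g v * (fCoeff a k * planeWave k (x + (2 * Real.pi * t) • v.ofLp))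
  have hF_integrable (k : Z2) : Integrable (F k) := by
    have hcont := continuous_planeWave k
    refine hg.mul_bdd (c := ‖fCoeff a k‖) (Continuous.aestronglyMeasurable (by fun_prop))
      (.of_forall fun v => ?_)
    rw [norm_mul, norm_planeWave, mul_one]
  have hF_summable : Summable fun k => ∫ v, ‖F k v‖ := by
    simp only [F, norm_mul, norm_planeWave, mul_one, integral_mul_const]
    exact hs.norm.mul_left _
  have hF_integral (k : Z2) :
      ∫ v, F k v = 𝓕⁻ g (t • freqVec k) * fCoeff a k * planeWave k x := by
    rw [Real.fourierInv_eq', mul_assoc, ← integral_mul_const]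
    congr 1 with v
    simp only [F, planeWave_add, planeWave_smul_ofLp, smul_eq_mul]
    ring
  have hF_tsum (v : EuclideanPlane) : ∑' k, F k v = g v * a (x + (2 * Real.pi * t) • v.ofLp) :=
    ((hp.hasSum_fourierSeries hc hs _).mul_left _).tsum_eq
  simp only [← hF_tsum, ← integral_tsum_of_summable_integral_norm hF_integrable hF_summable,
    hF_integral]
  rfl

theorem norm_Tmult_fourierInv_le (hp : Periodic2 a) (hc : Continuous a)
    (hs : Summable (fCoeff a)) {g : EuclideanPlane → ℂ} (hg : Integrable g) (t : ℝ) (x : ℝ × ℝ) :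
    ‖Tmult (fun k => 𝓕⁻ g (t • freqVec k)) a x‖ ≤ (∫ v, ‖g v‖) * supNorm a := by
  rw [Tmult_fourierInv_eq_integral hp hc hs hg, ← integral_mul_const]
  refine norm_integral_le_of_norm_le (hg.norm.mul_const _) (.of_forall fun v => ?_)
  rw [norm_mul]
  exact mul_le_mul_of_nonneg_left (hp.norm_le_supNorm hc _) (norm_nonneg _)

end Multiplier

section DyadicDecomposition

variable {E F : Type*} [NormedAddCommGroup E] [NormedSpace ℝ E] [HasContDiffBump E]
  [NormedAddCommGroup F] [NormedSpace ℝ F] (χ : ContDiffBump (0 : E)) (m : E → F)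

/-- The part of the symbol `m` that lives on the annulus where the bump `χ` and its dilate
`χ (2 • ·)` differ: the building block of the Littlewood-Paley decomposition of `m`. -/
def dyadicPiece (w : E) : F := (χ w - χ ((2 : ℝ) • w)) • m w

lemma dyadicPiece_zero : dyadicPiece χ m 0 = 0 := by
  simp [dyadicPiece]

lemma dyadicPiece_eq_zero_of_rOut_le_norm {w : E} (hw : χ.rOut ≤ ‖w‖) : dyadicPiece χ m w = 0 := by
  have hw2 : χ.rOut ≤ ‖(2 : ℝ) • w‖ := by
    rw [norm_smul, Real.norm_two]
    linarith [norm_nonneg w]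
  rw [dyadicPiece, χ.zero_of_le_dist (by rwa [dist_zero_right]),
    χ.zero_of_le_dist (by rwa [dist_zero_right]), sub_zero, zero_smul]

lemma dyadicPiece_eq_zero_of_two_mul_norm_le_rIn {w : E} (hw : 2 * ‖w‖ ≤ χ.rIn) :
    dyadicPiece χ m w = 0 := by
  rw [dyadicPiece, χ.one_of_mem_closedBall, χ.one_of_mem_closedBall, sub_self, zero_smul]
  · rwa [mem_closedBall_zero_iff, norm_smul, Real.norm_two]
  · rw [mem_closedBall_zero_iff]
    linarith [norm_nonneg w]

lemma hasCompactSupport_dyadicPiece [FiniteDimensional ℝ E] :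
    HasCompactSupport (dyadicPiece χ m) := by
  have : ProperSpace E := FiniteDimensional.proper ℝ E
  refine .intro (isCompact_closedBall (0 : E) χ.rOut) fun w hw => ?_
  rw [mem_closedBall_zero_iff, not_le] at hw
  exact dyadicPiece_eq_zero_of_rOut_le_norm χ m hw.le

variable {m}

lemma contDiff_dyadicPiece {n : ℕ∞} (hm : ContDiffOn ℝ n m {0}ᶜ) :
    ContDiff ℝ n (dyadicPiece χ m) := by
  rw [contDiff_iff_contDiffAt]
  intro w
  rcases eq_or_ne w 0 with rfl | hw
  · have hzero : dyadicPiece χ m =ᶠ[nhds 0] fun _ => 0 := by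
      filter_upwards [Metric.ball_mem_nhds (0 : E) (half_pos χ.rIn_pos)] with v hv
      rw [mem_ball_zero_iff] at hv
      exact dyadicPiece_eq_zero_of_two_mul_norm_le_rIn χ m (by linarith)
    exact contDiffAt_const.congr_of_eventuallyEq hzero
  · have hχ : ContDiff ℝ n fun w : E => χ w - χ ((2 : ℝ) • w) :=
      χ.contDiff.sub (χ.contDiff.comp (contDiff_const_smul 2))
    exact hχ.contDiffAt.smul (hm.contDiffAt (isOpen_compl_singleton.mem_nhds hw))

lemma dyadicPiece_inv_pow_smul (hm : ∀ c : ℝ, 0 < c → ∀ w : E, w ≠ 0 → m (c • w) = m w)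
    {w : E} (hw : w ≠ 0) (j : ℕ) :
    dyadicPiece χ m (((2 : ℝ) ^ j)⁻¹ • w)
      = χ ((2 / (2 : ℝ) ^ (j + 1)) • w) • m w - χ ((2 / (2 : ℝ) ^ j) • w) • m w := by
  have hscale : 2 / (2 : ℝ) ^ (j + 1) = ((2 : ℝ) ^ j)⁻¹ := by
    field_simp
    ring
  rw [dyadicPiece, hm _ (by positivity) w hw, hscale, smul_smul, ← div_eq_mul_inv, sub_smul]

lemma sum_dyadicPiece_inv_pow_smul
    (hm : ∀ c : ℝ, 0 < c → ∀ w : E, w ≠ 0 → m (c • w) = m w) {w : E} (hw : χ.rOut ≤ 2 * ‖w‖)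
    {J : ℕ} (hJ : ‖w‖ ≤ 2 ^ J * χ.rIn) :
    ∑ j ∈ Finset.range (J + 1), dyadicPiece χ m (((2 : ℝ) ^ j)⁻¹ • w) = m w := by
  have hw0 : w ≠ 0 := norm_pos_iff.1 (by linarith [χ.rOut_pos])
  have hfirst : χ ((2 / (2 : ℝ) ^ 0) • w) = 0 := χ.zero_of_le_dist <| by
    simpa [norm_smul] using hw
  have hlast : χ ((2 / (2 : ℝ) ^ (J + 1)) • w) = 1 := χ.one_of_mem_closedBall <| by
    rw [mem_closedBall_zero_iff, norm_smul, Real.norm_of_nonneg (by positivity), pow_succ]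
    field_simp
    linarith
  rw [Finset.sum_congr rfl fun j _ => dyadicPiece_inv_pow_smul χ hm hw0 j,
    Finset.sum_range_sub (fun j => χ ((2 / (2 : ℝ) ^ j) • w) • m w), hfirst, hlast, one_smul,
    zero_smul, sub_zero]

end DyadicDecomposition

section LogarithmicBound

lemma exists_integrable_fourierInv_eq {V W : Type*} [NormedAddCommGroup V] [InnerProductSpace ℝ V]
    [FiniteDimensional ℝ V] [MeasurableSpace V] [BorelSpace V] [NormedAddCommGroup W]
    [NormedSpace ℂ W] [CompleteSpace W] {φ : V → W} (hsupp : HasCompactSupport φ)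
    (hφ : ContDiff ℝ (⊤ : ℕ∞) φ) :
    ∃ g : V → W, Integrable g ∧ 𝓕⁻ g = φ := by
  let f : SchwartzMap V W := hsupp.toSchwartzMap hφ
  refine ⟨(𝓕 f : SchwartzMap V W), (𝓕 f : SchwartzMap V W).integrable, ?_⟩
  rw [← SchwartzMap.fourierInv_coe, FourierTransform.fourierInv_fourier_eq]
  rfl

lemma exists_kernel_sum_fourierInv_eq {m : ℝ × ℝ → ℂ}
    (hm : ContDiffOn ℝ (⊤ : ℕ∞) m {x : ℝ × ℝ | x ≠ 0})
    (hhom : ∀ c : ℝ, 0 < c → ∀ x : ℝ × ℝ, x ≠ 0 → m (c * x.1, c * x.2) = m x) :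
    ∃ g : EuclideanPlane → ℂ, Integrable g ∧ ∀ (J : ℕ) (k : Z2), knorm k ≤ 2 ^ J →
      (if k = 0 then 0 else m (toR k))
        = ∑ j ∈ Finset.range (J + 1), 𝓕⁻ g (((2 : ℝ) ^ j)⁻¹ • freqVec k) := by
  let χ : ContDiffBump (0 : EuclideanPlane) := ⟨1, 2, one_pos, one_lt_two⟩
  let M : EuclideanPlane → ℂ := fun w => m w.ofLp
  have hM_smooth : ContDiffOn ℝ (⊤ : ℕ∞) M {0}ᶜ :=
    hm.comp (WithLp.contDiff_ofLp).contDiffOn fun w hw => (WithLp.ofLp_eq_zero 2).not.2 hw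
  have hM_hom (c : ℝ) (hc : 0 < c) (w : EuclideanPlane) (hw : w ≠ 0) : M (c • w) = M w :=
    hhom c hc w.ofLp ((WithLp.ofLp_eq_zero 2).not.2 hw)
  obtain ⟨g, hg, hgφ⟩ := exists_integrable_fourierInv_eq
    (hasCompactSupport_dyadicPiece χ M) (contDiff_dyadicPiece χ hM_smooth)
  refine ⟨g, hg, fun J k hkJ => ?_⟩
  rw [hgφ]
  split_ifs with hk
  · subst hk
    have hfreq : freqVec 0 = 0 := by simp [freqVec, toR]
    simp only [hfreq, smul_zero, dyadicPiece_zero, Finset.sum_const_zero]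
  · refine (sum_dyadicPiece_inv_pow_smul χ hM_hom (w := freqVec k) ?_ ?_).symm
    · linarith [one_le_knorm hk, norm_freqVec k, show χ.rOut = 2 from rfl]
    · rwa [norm_freqVec, show χ.rIn = 1 from rfl, mul_one]

theorem exists_norm_Tmult_le_card_scales_mul {m : ℝ × ℝ → ℂ}
    (hm : ContDiffOn ℝ (⊤ : ℕ∞) m {x : ℝ × ℝ | x ≠ 0})
    (hhom : ∀ c : ℝ, 0 < c → ∀ x : ℝ × ℝ, x ≠ 0 → m (c * x.1, c * x.2) = m x) :
    ∃ C, 0 ≤ C ∧ ∀ (J : ℕ) (a : ℝ × ℝ → ℂ), Continuous a → Periodic2 a →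
      (∀ k, 2 ^ J < knorm k → fCoeff a k = 0) →
      ∀ x, ‖Tmult (fun k => if k = 0 then 0 else m (toR k)) a x‖ ≤ (J + 1) * (C * supNorm a) := by
  obtain ⟨g, hg, hsum⟩ := exists_kernel_sum_fourierInv_eq hm hhom
  refine ⟨∫ v, ‖g v‖, by positivity, fun J a hc hp ha x => ?_⟩
  have hfin := hasFiniteSupport_fCoeff ha
  calc ‖Tmult (fun k => if k = 0 then 0 else m (toR k)) a x‖
      = ‖∑ j ∈ Finset.range (J + 1),
          Tmult (fun k => 𝓕⁻ g (((2 : ℝ) ^ j)⁻¹ • freqVec k)) a x‖ := by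
        rw [Tmult_congr fun k hk => hsum J k (not_lt.1 (mt (ha k) hk)),
          Tmult_finset_sum _ _ hfin]
    _ ≤ ∑ _j ∈ Finset.range (J + 1), (∫ v, ‖g v‖) * supNorm a :=
        norm_sum_le_of_le _ fun j _ =>
          norm_Tmult_fourierInv_le hp hc (summable_of_hasFiniteSupport hfin) hg _ x
    _ = (J + 1) * ((∫ v, ‖g v‖) * supNorm a) := by
        rw [Finset.sum_const, Finset.card_range, nsmul_eq_mul, Nat.cast_add_one]

lemma exists_le_two_pow_and_add_one_le_mul_log {μ₀ μ : ℝ} (hμ₀ : 1 < μ₀) (hμ : μ₀ ≤ μ) :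
    ∃ J : ℕ, μ ≤ 2 ^ J ∧ (J : ℝ) + 1 ≤ (1 / Real.log 2 + 2 / Real.log μ₀) * Real.log μ := by
  have hlog₀ : 0 < Real.log μ₀ := Real.log_pos hμ₀
  have hlog : 1 ≤ Real.log μ / Real.log μ₀ :=
    (one_le_div hlog₀).2 (Real.log_le_log (by linarith) hμ)
  refine ⟨⌈Real.logb 2 μ⌉₊, ?_, ?_⟩
  · rw [← Real.rpow_natCast, ← Real.logb_le_iff_le_rpow one_lt_two (by linarith)]
    exact Nat.le_ceil _
  · calc (⌈Real.logb 2 μ⌉₊ : ℝ) + 1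
        ≤ Real.logb 2 μ + 2 * 1 := by
          linarith [Nat.ceil_lt_add_one (Real.logb_nonneg one_lt_two (hμ₀.le.trans hμ))]
      _ ≤ Real.log μ / Real.log 2 + 2 * (Real.log μ / Real.log μ₀) := by
          rw [Real.logb]
          gcongr
      _ = (1 / Real.log 2 + 2 / Real.log μ₀) * Real.log μ := by ring

theorem stmt9_general (m : ℝ × ℝ → ℂ)
    (hm : ContDiffOn ℝ (⊤ : ℕ∞) m {x : ℝ × ℝ | x ≠ 0})
    (hhom : ∀ c : ℝ, 0 < c → ∀ x : ℝ × ℝ, x ≠ 0 → m (c * x.1, c * x.2) = m x)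
    {μ₀ : ℝ} (hμ₀ : 1 < μ₀) :
    ∃ C : ℝ, ∀ μ : ℝ, μ₀ ≤ μ → ∀ a : ℝ × ℝ → ℂ, Continuous a → Periodic2 a →
      (∀ k : Z2, μ < knorm k → fCoeff a k = 0) →
      ∀ x, ‖Tmult (fun k => if k = 0 then 0 else m (toR k)) a x‖
        ≤ C * supNorm a * Real.log μ := by
  obtain ⟨A, hA, hbound⟩ := exists_norm_Tmult_le_card_scales_mul hm hhom
  refine ⟨(1 / Real.log 2 + 2 / Real.log μ₀) * A, fun μ hμ a hc hp ha x => ?_⟩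
  obtain ⟨J, hμJ, hJ⟩ := exists_le_two_pow_and_add_one_le_mul_log hμ₀ hμ
  have hsup : 0 ≤ supNorm a := Real.iSup_nonneg fun x => norm_nonneg (a x)
  calc _ ≤ (J + 1) * (A * supNorm a) := hbound J a hc hp (fun k hk => ha k (hμJ.trans_lt hk)) x
    _ ≤ (1 / Real.log 2 + 2 / Real.log μ₀) * Real.log μ * (A * supNorm a) := by gcongr
    _ = (1 / Real.log 2 + 2 / Real.log μ₀) * A * supNorm a * Real.log μ := by ring

end LogarithmicBound

/-- Lemma A.1: if `m` is smooth away from the origin and homogeneous of degree 0,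
and `R` is the multiplier with symbol `m(k)` (killing the mean), then for `μ ≥ 10` and `a`
real-valued with Fourier support in `{|k| ≤ μ}`, `‖Ra‖_∞ ≤ C_m ‖a‖_∞ log μ`. -/
theorem stmt9 (m : ℝ × ℝ → ℂ)
    (hm : ContDiffOn ℝ (⊤ : ℕ∞) m {x : ℝ × ℝ | x ≠ 0})
    (hhom : ∀ c : ℝ, 0 < c → ∀ x : ℝ × ℝ, x ≠ 0 → m (c * x.1, c * x.2) = m x) :
    ∃ C : ℝ, ∀ μ : ℝ, 10 ≤ μ → ∀ a : ℝ × ℝ → ℂ,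
      Continuous a → Periodic2 a → RealValued a →
      (∀ k : Z2, μ < knorm k → fCoeff a k = 0) →
      ∀ x, ‖Tmult (fun k => if k = 0 then 0 else m (toR k)) a x‖ ≤ C * supNorm a * Real.log μ :=
  (stmt9_general m hm hhom (by norm_num : (1 : ℝ) < 10)).imp
    fun _ h μ hμ a hc hp _ => h μ hμ a hc hp

end
end
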